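/- Let A ∈ ℝ^{m×n} with m ≤ n and A ≠ 0, with largest singular value σ₁, let k be a positive integer with 3k ≤ n, and let δ ∈ (0,1) be a restricted isometry constant of order 3k for A with δ < 1/√3. Let ε > max{σ₁², (σ₁²/(1/√3 − δ) − 1)σ₁²}. Let x ∈ ℝ^n be k-sparse and y = Ax. If (x^p)_{p≥0} is a sequence in ℝ^n such that x^0 is k-sparse and, for every p ≥ 0, x^{p+1} is a hard k-thresholding of x^p + ε(AᵀA + εI)^{−1}Aᵀ(y − Ax^p) (i.e., the iteration with stepsize λ = ε), then x^p converges to x as p → ∞. -/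

import Mathlib

/-!
Write `G = Aᵀ A`, `s = σ₁²` and `e = x^p - x`. The point that gets thresholded is `x + u`, where
`u = e - ε (G + ε)⁻¹ G e`. Since `G - ε (G + ε)⁻¹ G = G² (G + ε)⁻¹` has operator norm at most
`s² / (s + ε)` (`newton_correction`), the map `e ↦ u` is a perturbation of `I - G` of this size.
The restricted isometry property, polarised (`ric_bilin`), bounds `I - G` by `δ` between vectors
with supports in a common set of `3k` indices. So the restriction of `u` to `T = S ∪ supp x`, where
`S` is the index set selected by the thresholding, has norm at most `(δ + s² / (s + ε)) ‖e‖`.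

Hard thresholding loses at most a factor `√3`: the entries of `x` outside `S` are controlled by
comparing the entries of `x + u` on `supp x \ S` with those on `S \ supp x`
(`thresholding_bound`). The hypothesis on `ε` says exactly that
`√3 (δ + s² / (s + ε)) < 1`, so the errors decay geometrically.
-/

open Matrix Filter Topology

/-- Euclidean (ℓ₂) norm of a vector in ℝ^n. -/
noncomputable def norm2 {n : ℕ} (x : Fin n → ℝ) : ℝ := Real.sqrt (∑ i, x i ^ 2)

/-- Euclidean inner product. -/
def dot {n : ℕ} (u v : Fin n → ℝ) : ℝ := ∑ i, u i * v i

/-- Support of a vector. -/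
def supp {n : ℕ} (x : Fin n → ℝ) : Set (Fin n) := {i | x i ≠ 0}

/-- δ ∈ (0,1) is a restricted isometry constant of order q for A. -/
def IsRIC {m n : ℕ} (A : Matrix (Fin m) (Fin n) ℝ) (q : ℕ) (δ : ℝ) : Prop :=
  0 < δ ∧ δ < 1 ∧
    ∀ x : Fin n → ℝ, (supp x).ncard ≤ q →
      (1 - δ) * norm2 x ^ 2 ≤ norm2 (A.mulVec x) ^ 2 ∧
      norm2 (A.mulVec x) ^ 2 ≤ (1 + δ) * norm2 x ^ 2

/-- σ is the largest singular value (spectral norm) of A: it bounds ‖Av‖₂/‖v‖₂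
and this bound is attained. -/
def IsMaxSingularValue {m n : ℕ} (A : Matrix (Fin m) (Fin n) ℝ) (σ : ℝ) : Prop :=
  0 ≤ σ ∧ (∀ v : Fin n → ℝ, norm2 (A.mulVec v) ≤ σ * norm2 v) ∧
    ∃ v : Fin n → ℝ, v ≠ 0 ∧ norm2 (A.mulVec v) = σ * norm2 v

/-- For m ≤ n, σ is the smallest singular value of A, i.e. σ² is the smallest
eigenvalue of A Aᵀ: σ is the infimum of ‖Aᵀu‖₂/‖u‖₂ and it is attained. -/
def IsMinSingularValue {m n : ℕ} (A : Matrix (Fin m) (Fin n) ℝ) (σ : ℝ) : Prop :=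
  0 ≤ σ ∧ (∀ u : Fin m → ℝ, σ * norm2 u ≤ norm2 (Aᵀ.mulVec u)) ∧
    ∃ u : Fin m → ℝ, u ≠ 0 ∧ norm2 (Aᵀ.mulVec u) = σ * norm2 u

/-- w is a hard k-thresholding of z with associated index set S*. -/
def IsHardThresholding {n : ℕ} (k : ℕ) (z w : Fin n → ℝ) (S : Set (Fin n)) : Prop :=
  S.ncard = k ∧ (∀ i ∈ S, w i = z i) ∧ (∀ i ∉ S, w i = 0) ∧
    ∀ i ∈ S, ∀ j ∉ S, |z j| ≤ |z i|

lemma norm2_nonneg' {n : ℕ} (x : Fin n → ℝ) : 0 ≤ norm2 x := Real.sqrt_nonneg _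

lemma norm2_sq {n : ℕ} (x : Fin n → ℝ) : norm2 x ^ 2 = x ⬝ᵥ x := by
  unfold norm2
  rw [Real.sq_sqrt (Finset.sum_nonneg fun i _ => sq_nonneg _)]
  simp [dotProduct, sq]

lemma dot_sq_le {n : ℕ} (u v : Fin n → ℝ) : (u ⬝ᵥ v) ^ 2 ≤ (u ⬝ᵥ u) * (v ⬝ᵥ v) := by
  have := Finset.sum_mul_sq_le_sq_mul_sq Finset.univ u v
  simpa [dotProduct, sq] using this

lemma dot_le {n : ℕ} (u v : Fin n → ℝ) : u ⬝ᵥ v ≤ norm2 u * norm2 v := by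
  refine le_of_sq_le_sq ?_ (mul_nonneg (norm2_nonneg' u) (norm2_nonneg' v))
  rw [mul_pow, norm2_sq, norm2_sq]
  exact dot_sq_le u v

lemma dot_gram {m n : ℕ} (A : Matrix (Fin m) (Fin n) ℝ) (u v : Fin n → ℝ) :
    u ⬝ᵥ ((Aᵀ * A) *ᵥ v) = (A *ᵥ u) ⬝ᵥ (A *ᵥ v) := by
  rw [← Matrix.mulVec_mulVec, Matrix.dotProduct_mulVec, Matrix.vecMul_transpose]

/-- The restricted isometry property in bilinear form. -/
lemma ric_bilin {m n : ℕ} {A : Matrix (Fin m) (Fin n) ℝ} {q : ℕ} {δ : ℝ} (h : IsRIC A q δ)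
    (U : Finset (Fin n)) (hU : U.card ≤ q) (u v : Fin n → ℝ)
    (hu : ∀ i ∉ U, u i = 0) (hv : ∀ i ∉ U, v i = 0) :
    u ⬝ᵥ v - (A *ᵥ u) ⬝ᵥ (A *ᵥ v) ≤ δ * (norm2 u * norm2 v) := by
  obtain ⟨h0, h1, h2⟩ := h
  have key : ∀ z : Fin n → ℝ, (∀ i ∉ U, z i = 0) →
      (1 - δ) * (z ⬝ᵥ z) ≤ (A *ᵥ z) ⬝ᵥ (A *ᵥ z) ∧
      (A *ᵥ z) ⬝ᵥ (A *ᵥ z) ≤ (1 + δ) * (z ⬝ᵥ z) := by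
    intro z hz
    have hc : (supp z).ncard ≤ q := by
      refine le_trans ?_ hU
      rw [← Set.ncard_coe_finset U]
      refine Set.ncard_le_ncard (fun i hi => ?_) U.finite_toSet
      by_contra hiU
      exact hi (hz i (by simpa using hiU))
    have := h2 z hc
    rwa [norm2_sq, norm2_sq] at this
  -- Polarisation at `t u + v` and `t u - v`; the optimal `t` is encoded by the discriminant.
  have quad : ∀ t : ℝ, 0 ≤ (δ * (u ⬝ᵥ u)) * (t * t)
      + (-2 * (u ⬝ᵥ v - (A *ᵥ u) ⬝ᵥ (A *ᵥ v))) * t + δ * (v ⬝ᵥ v) := by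
    intro t
    have k1 := (key (t • u + v) (fun i hi => by simp [hu i hi, hv i hi])).1
    have k2 := (key (t • u - v) (fun i hi => by simp [hu i hi, hv i hi])).2
    simp only [Matrix.mulVec_add, Matrix.mulVec_sub, Matrix.mulVec_smul, add_dotProduct,
      sub_dotProduct, dotProduct_add, dotProduct_sub, smul_dotProduct, dotProduct_smul,
      smul_eq_mul] at k1 k2
    rw [dotProduct_comm v u, dotProduct_comm (A *ᵥ v) (A *ᵥ u)] at k1 k2
    linarith
  have hd := discrim_le_zero quad
  unfold discrim at hd
  refine le_of_sq_le_sq ?_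
    (mul_nonneg h0.le (mul_nonneg (norm2_nonneg' u) (norm2_nonneg' v)))
  rw [mul_pow, mul_pow, norm2_sq, norm2_sq]
  linarith

/-- If `h = (G + ε)⁻¹ G v` with `G = Aᵀ A`, then `‖G h‖ ≤ s² / (s + ε) ‖v‖` for `s = σ²`, written
without the division. In terms of `r = v - h` this says that
`(s + ε) ‖G² r‖ ≤ s² ‖ε r + G r‖`, which holds term by term after squaring. -/
lemma newton_correction {m n : ℕ} (A : Matrix (Fin m) (Fin n) ℝ) {σ ε : ℝ} (hε : 0 < ε)
    (hA : ∀ v : Fin n → ℝ, norm2 (A *ᵥ v) ≤ σ * norm2 v)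
    (h v : Fin n → ℝ) (hh : (Aᵀ * A) *ᵥ h + ε • h = (Aᵀ * A) *ᵥ v) :
    (σ ^ 2 + ε) * norm2 ((Aᵀ * A) *ᵥ h) ≤ (σ ^ 2) ^ 2 * norm2 v := by
  have hA2 : ∀ z : Fin n → ℝ, (A *ᵥ z) ⬝ᵥ (A *ᵥ z) ≤ σ ^ 2 * (z ⬝ᵥ z) := by
    intro z
    rw [← norm2_sq, ← norm2_sq, ← mul_pow]
    exact pow_le_pow_left₀ (norm2_nonneg' _) (hA z) 2
  have nn : ∀ {l : ℕ} (z : Fin l → ℝ), 0 ≤ z ⬝ᵥ z := fun z => by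
    rw [← norm2_sq]; positivity
  have hG : ∀ z : Fin n → ℝ, ((Aᵀ * A) *ᵥ z) ⬝ᵥ ((Aᵀ * A) *ᵥ z) ≤
      σ ^ 2 * ((A *ᵥ z) ⬝ᵥ (A *ᵥ z)) := by
    intro z
    set g := (Aᵀ * A) *ᵥ z with hg
    have e1 : g ⬝ᵥ g = (A *ᵥ g) ⬝ᵥ (A *ᵥ z) := dot_gram A g z
    have e2 := dot_sq_le (A *ᵥ g) (A *ᵥ z)
    have e3 := hA2 g
    rw [← e1] at e2
    rcases (nn g).eq_or_lt with h0 | h0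
    · rw [← h0]; exact mul_nonneg (sq_nonneg _) (nn _)
    · have := mul_le_mul_of_nonneg_right e3 (nn (A *ᵥ z))
      refine le_of_mul_le_mul_left ?_ h0
      nlinarith
  set r := v - h with hr
  have e1 : (Aᵀ * A) *ᵥ r = ε • h := by
    rw [hr, Matrix.mulVec_sub, ← hh]; simp
  set G := Aᵀ * A with hGdef
  have e2 : ε • v = ε • r + G *ᵥ r := by rw [e1, hr, smul_sub]; simp
  have e3 : G *ᵥ (G *ᵥ r) = ε • (G *ᵥ h) := by rw [e1, Matrix.mulVec_smul]
  have s0 : 0 ≤ σ ^ 2 := sq_nonneg σ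
  have b1 := hG r
  have b2 := hA2 r
  have b3 := hG (G *ᵥ r)
  have b4 := hA2 (G *ᵥ r)
  have d : ε ^ 2 * (v ⬝ᵥ v) = ε ^ 2 * (r ⬝ᵥ r) + 2 * ε * ((A *ᵥ r) ⬝ᵥ (A *ᵥ r))
      + (G *ᵥ r) ⬝ᵥ (G *ᵥ r) := by
    have : (ε • v) ⬝ᵥ (ε • v) = ε ^ 2 * (v ⬝ᵥ v) := by
      simp only [smul_dotProduct, dotProduct_smul, smul_eq_mul]; ring
    rw [← this, e2, ← dot_gram A r r, ← hGdef]
    simp only [add_dotProduct, dotProduct_add, smul_dotProduct, dotProduct_smul, smul_eq_mul]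
    rw [dotProduct_comm (G *ᵥ r) r]; ring
  have d2 : (G *ᵥ (G *ᵥ r)) ⬝ᵥ (G *ᵥ (G *ᵥ r)) = ε ^ 2 * ((G *ᵥ h) ⬝ᵥ (G *ᵥ h)) := by
    rw [e3]; simp only [smul_dotProduct, dotProduct_smul, smul_eq_mul]; ring
  generalize σ ^ 2 = s at *
  have c1 : (G *ᵥ (G *ᵥ r)) ⬝ᵥ (G *ᵥ (G *ᵥ r)) ≤ s ^ 2 * ((G *ᵥ r) ⬝ᵥ (G *ᵥ r)) := by
    nlinarith
  have c2 : (G *ᵥ (G *ᵥ r)) ⬝ᵥ (G *ᵥ (G *ᵥ r)) ≤ s ^ 3 * ((A *ᵥ r) ⬝ᵥ (A *ᵥ r)) := by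
    nlinarith [mul_le_mul_of_nonneg_left b1 (sq_nonneg s)]
  have c3 : (G *ᵥ (G *ᵥ r)) ⬝ᵥ (G *ᵥ (G *ᵥ r)) ≤ s ^ 4 * (r ⬝ᵥ r) := by
    nlinarith [mul_le_mul_of_nonneg_left b2 (pow_nonneg s0 3)]
  refine le_of_sq_le_sq ?_ (mul_nonneg (sq_nonneg _) (norm2_nonneg' _))
  rw [mul_pow, mul_pow, norm2_sq, norm2_sq]
  refine le_of_mul_le_mul_left ?_ (pow_pos hε 2)
  have f1 := mul_le_mul_of_nonneg_left c1 (sq_nonneg s)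
  have f2 := mul_le_mul_of_nonneg_left c2 (mul_nonneg s0 hε.le)
  have f3 := mul_le_mul_of_nonneg_left c3 (sq_nonneg ε)
  calc ε ^ 2 * ((s + ε) ^ 2 * ((G *ᵥ h) ⬝ᵥ (G *ᵥ h)))
      = (s + ε) ^ 2 * ((G *ᵥ (G *ᵥ r)) ⬝ᵥ (G *ᵥ (G *ᵥ r))) := by rw [d2]; ring
    _ ≤ s ^ 4 * (ε ^ 2 * (v ⬝ᵥ v)) := by rw [d]; linarith
    _ = ε ^ 2 * ((s ^ 2) ^ 2 * (v ⬝ᵥ v)) := by ring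

lemma sum_le_sum_of_card {ι : Type*} (P Q : Finset ι) (f : ι → ℝ) (hc : P.card ≤ Q.card)
    (hf : ∀ i, 0 ≤ f i) (h : ∀ j ∈ P, ∀ i ∈ Q, f j ≤ f i) :
    ∑ j ∈ P, f j ≤ ∑ i ∈ Q, f i := by
  rcases P.eq_empty_or_nonempty with rfl | hP
  · simpa using Finset.sum_nonneg fun i _ => hf i
  · obtain ⟨a, ha, hmax⟩ := P.exists_max_image f hP
    have h1 := Finset.sum_le_card_nsmul P f (f a) hmax
    have h2 := Finset.card_nsmul_le_sum Q f (f a) (h a ha)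
    have h3 : P.card • f a ≤ Q.card • f a := nsmul_le_nsmul_left (hf a) hc
    linarith

/-- Hard thresholding of `z` to the index set `S` recovers `x` up to three times the squared error
of `z` on `S ∪ X`, where `X` contains the support of `x`. -/
lemma thresholding_bound {n : ℕ} (S X : Finset (Fin n)) (hc : X.card ≤ S.card)
    (x z w : Fin n → ℝ) (hx : ∀ i ∉ X, x i = 0) (h1 : ∀ i ∈ S, w i = z i)
    (h2 : ∀ i ∉ S, w i = 0) (h3 : ∀ i ∈ S, ∀ j ∉ S, |z j| ≤ |z i|) :
    ∑ i, (w i - x i) ^ 2 ≤ 3 * ∑ i ∈ S ∪ X, (z i - x i) ^ 2 := by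
  have hcard : (X \ S).card ≤ (S \ X).card :=
    Finset.card_sdiff_le_card_sdiff_iff.2 hc
  have hz : ∑ i ∈ X \ S, z i ^ 2 ≤ ∑ i ∈ S \ X, z i ^ 2 :=
    sum_le_sum_of_card _ _ _ hcard (fun i => sq_nonneg _) fun j hj i hi =>
      sq_le_sq.2 (h3 i (Finset.mem_sdiff.1 hi).1 j (Finset.mem_sdiff.1 hj).2)
  have hz' : ∑ i ∈ S \ X, z i ^ 2 = ∑ i ∈ S \ X, (z i - x i) ^ 2 :=
    Finset.sum_congr rfl fun i hi => by rw [hx i (Finset.mem_sdiff.1 hi).2, sub_zero]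
  have hall : ∑ i, (w i - x i) ^ 2 = ∑ i ∈ S ∪ X, (w i - x i) ^ 2 := by
    refine (Finset.sum_subset (Finset.subset_univ _) fun i _ hi => ?_).symm
    rw [Finset.mem_union, not_or] at hi
    rw [h2 i hi.1, hx i hi.2]; norm_num
  have hsplit : ∀ f : Fin n → ℝ, ∑ i ∈ S ∪ X, f i = ∑ i ∈ S, f i + ∑ i ∈ X \ S, f i := by
    intro f
    rw [← Finset.union_sdiff_self_eq_union, Finset.sum_union Finset.disjoint_sdiff]
  have hS : ∑ i ∈ S, (w i - x i) ^ 2 = ∑ i ∈ S, (z i - x i) ^ 2 :=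
    Finset.sum_congr rfl fun i hi => by rw [h1 i hi]
  have hX : ∑ i ∈ X \ S, (w i - x i) ^ 2 ≤
      2 * ∑ i ∈ X \ S, z i ^ 2 + 2 * ∑ i ∈ X \ S, (z i - x i) ^ 2 := by
    rw [Finset.mul_sum, Finset.mul_sum, ← Finset.sum_add_distrib]
    refine Finset.sum_le_sum fun i hi => ?_
    rw [h2 i (Finset.mem_sdiff.1 hi).2]
    nlinarith [sq_nonneg (2 * z i - x i)]
  have hsub : ∑ i ∈ S \ X, (z i - x i) ^ 2 ≤ ∑ i ∈ S, (z i - x i) ^ 2 :=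
    Finset.sum_le_sum_of_subset_of_nonneg Finset.sdiff_subset fun i _ _ => sq_nonneg _
  have hnn : 0 ≤ ∑ i ∈ X \ S, (z i - x i) ^ 2 := Finset.sum_nonneg fun i _ => sq_nonneg _
  rw [hall, hsplit, hsplit, hS]
  linarith

/-- One iteration contracts the error by the factor `√3 (δ + σ⁴ / (σ² + ε))`. -/
lemma step_bound {m n : ℕ} (A : Matrix (Fin m) (Fin n) ℝ) {σ ε δ : ℝ} {k : ℕ} (hε : 0 < ε)
    (hA : ∀ v : Fin n → ℝ, norm2 (A *ᵥ v) ≤ σ * norm2 v)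
    (hδ : IsRIC A (3 * k) δ) (x a w : Fin n → ℝ) (hx : (supp x).ncard ≤ k)
    (ha : (supp a).ncard ≤ k) (S : Set (Fin n))
    (hw : IsHardThresholding k
        (a + ε • ((Aᵀ * A + ε • (1 : Matrix (Fin n) (Fin n) ℝ))⁻¹).mulVec
          (Aᵀ.mulVec (A *ᵥ x - A.mulVec a))) w S) :
    norm2 (w - x) ≤ √3 * (δ + (σ ^ 2) ^ 2 / (σ ^ 2 + ε)) * norm2 (a - x) := by
  classical
  obtain ⟨hSk, h1, h2, h3⟩ := hw
  set e := a - x with he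
  set M := Aᵀ * A + ε • (1 : Matrix (Fin n) (Fin n) ℝ) with hM
  set h := M⁻¹ *ᵥ ((Aᵀ * A) *ᵥ e) with hh
  have hz : a + ε • M⁻¹ *ᵥ (Aᵀ *ᵥ (A *ᵥ x - A *ᵥ a)) = a - ε • h := by
    have : Aᵀ *ᵥ (A *ᵥ x - A *ᵥ a) = -((Aᵀ * A) *ᵥ e) := by
      rw [← Matrix.mulVec_sub, Matrix.mulVec_mulVec, ← Matrix.mulVec_neg, he, neg_sub]
    rw [this, Matrix.mulVec_neg, smul_neg, ← hh, sub_eq_add_neg]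
  rw [hz] at h1 h3
  have hMpd : M.PosDef := by
    refine Matrix.PosDef.posSemidef_add ?_ (Matrix.PosDef.one.smul hε)
    simpa using Matrix.posSemidef_conjTranspose_mul_self A
  have hhG : (Aᵀ * A) *ᵥ h + ε • h = (Aᵀ * A) *ᵥ e := by
    have : M *ᵥ h = (Aᵀ * A) *ᵥ e := by
      rw [hh, Matrix.mulVec_mulVec, Matrix.mul_nonsing_inv _
        ((Matrix.isUnit_iff_isUnit_det _).1 hMpd.isUnit), Matrix.one_mulVec]
    rw [← this, hM, Matrix.add_mulVec, Matrix.smul_mulVec, Matrix.one_mulVec]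
  have hcorr := newton_correction A hε hA h e hhG
  set S' := S.toFinset with hS'
  set X := (supp x).toFinset with hX
  set Y := (supp a).toFinset with hY
  have cS : S'.card = k := by rw [hS', ← Set.ncard_eq_toFinset_card', hSk]
  have cX : X.card ≤ k := by rw [hX, ← Set.ncard_eq_toFinset_card']; exact hx
  have cY : Y.card ≤ k := by rw [hY, ← Set.ncard_eq_toFinset_card']; exact ha
  have xX : ∀ i ∉ X, x i = 0 := fun i hi => by
    by_contra q
    exact hi (Set.mem_toFinset.2 q)
  have aY : ∀ i ∉ Y, a i = 0 := fun i hi => by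
    by_contra q
    exact hi (Set.mem_toFinset.2 q)
  have htb := thresholding_bound S' X (by omega) x (a - ε • h) w xX
    (fun i hi => h1 i (by simpa [hS'] using hi)) (fun i hi => h2 i (by simpa [hS'] using hi))
    (fun i hi j hj => h3 i (by simpa [hS'] using hi) j (by simpa [hS'] using hj))
  set T := S' ∪ X with hT
  set u : Fin n → ℝ := e - ε • h with hu
  -- `t` is the restriction of the error `u` to `T`.
  set t : Fin n → ℝ := fun i => if i ∈ T then u i else 0 with ht
  have htt : t ⬝ᵥ t = ∑ i ∈ T, ((a - ε • h) i - x i) ^ 2 := by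
    have : ∀ i, t i * t i = if i ∈ T then u i ^ 2 else 0 := fun i => by
      simp only [ht]; split_ifs <;> ring
    simp only [dotProduct, this, Finset.sum_ite_mem, Finset.univ_inter]
    refine Finset.sum_congr rfl fun i _ => ?_
    simp only [hu, he, Pi.sub_apply, Pi.smul_apply, smul_eq_mul]; ring
  have htu : t ⬝ᵥ t = t ⬝ᵥ u := by
    refine Finset.sum_congr rfl fun i _ => ?_
    simp only [ht]; split_ifs <;> simp
  have hur : u = (e - (Aᵀ * A) *ᵥ e) + (Aᵀ * A) *ᵥ h := by
    rw [hu, ← hhG]; abel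
  have hb : t ⬝ᵥ e - (A *ᵥ t) ⬝ᵥ (A *ᵥ e) ≤ δ * (norm2 t * norm2 e) := by
    refine ric_bilin hδ (T ∪ Y) ?_ t e (fun i hi => ?_) (fun i hi => ?_)
    · have := Finset.card_union_le T Y
      have : T.card ≤ S'.card + X.card := Finset.card_union_le S' X
      omega
    · rw [Finset.mem_union, not_or] at hi
      simp [ht, hi.1]
    · rw [Finset.mem_union, not_or] at hi
      have hiX : i ∉ X := fun q => hi.1 (Finset.mem_union_right _ q)
      simp [he, aY i hi.2, xX i hiX]
  have hpos : 0 < σ ^ 2 + ε := by positivity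
  have hc2 : norm2 ((Aᵀ * A) *ᵥ h) ≤ (σ ^ 2) ^ 2 / (σ ^ 2 + ε) * norm2 e := by
    rw [div_mul_eq_mul_div, le_div_iff₀ hpos]; linarith
  set c := (σ ^ 2) ^ 2 / (σ ^ 2 + ε) with hcdef
  have hc0 : 0 ≤ c := by positivity
  have t0 := norm2_nonneg' t
  have e0 := norm2_nonneg' e
  have hle : norm2 t ^ 2 ≤ norm2 t * ((δ + c) * norm2 e) := by
    rw [norm2_sq, htu, hur, dotProduct_add, dotProduct_sub, dot_gram]
    have g1 := dot_le t ((Aᵀ * A) *ᵥ h)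
    have g2 := mul_le_mul_of_nonneg_left hc2 t0
    linarith
  have hδc : 0 ≤ δ + c := add_nonneg hδ.1.le hc0
  have hnt : norm2 t ≤ (δ + c) * norm2 e := by
    rcases t0.eq_or_lt with q | q
    · rw [← q]; exact mul_nonneg hδc e0
    · rw [sq] at hle; exact le_of_mul_le_mul_left hle q
  have hfin : norm2 (w - x) ≤ √3 * norm2 t := by
    refine le_of_sq_le_sq ?_ (by positivity)
    rw [mul_pow, Real.sq_sqrt (by norm_num), norm2_sq t, htt]
    refine le_trans (le_of_eq ?_) htb
    rw [norm2_sq]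
    exact Finset.sum_congr rfl fun i _ => by simp [sq]
  calc norm2 (w - x) ≤ √3 * norm2 t := hfin
    _ ≤ √3 * ((δ + c) * norm2 e) := by gcongr
    _ = _ := by ring

/-- Corollary 3.5: NSIHT with stepsize lam = ε. -/
theorem stmt_8 {m n : ℕ} (hmn : m ≤ n) (A : Matrix (Fin m) (Fin n) ℝ) (hA : A ≠ 0)
    (σ1 : ℝ) (hσ1 : IsMaxSingularValue A σ1)
    (k : ℕ) (hk : 0 < k) (hkn : 3 * k ≤ n)
    (δ : ℝ) (hδ : IsRIC A (3 * k) δ) (hδ3 : δ < 1 / Real.sqrt 3)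
    (ε : ℝ)
    (hε : max (σ1 ^ 2) ((σ1 ^ 2 / (1 / Real.sqrt 3 - δ) - 1) * σ1 ^ 2) < ε)
    (x : Fin n → ℝ) (hx : (supp x).ncard ≤ k) (y : Fin m → ℝ) (hy : y = A.mulVec x)
    (xs : ℕ → Fin n → ℝ) (hx0 : (supp (xs 0)).ncard ≤ k)
    (hiter : ∀ p : ℕ, ∃ S : Set (Fin n),
      IsHardThresholding k
        (xs p + ε • ((Aᵀ * A + ε • (1 : Matrix (Fin n) (Fin n) ℝ))⁻¹).mulVec
          (Aᵀ.mulVec (y - A.mulVec (xs p))))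
        (xs (p + 1)) S) :
    Tendsto (fun p => norm2 (xs p - x)) atTop (𝓝 0) := by
  subst hy
  obtain ⟨-, hsA, -⟩ := hσ1
  have hεs : σ1 ^ 2 < ε := lt_of_le_of_lt (le_max_left _ _) hε
  have hε2 := lt_of_le_of_lt (le_max_right _ _) hε
  have hε0 : 0 < ε := lt_of_le_of_lt (sq_nonneg _) hεs
  set ρ := √3 * (δ + (σ1 ^ 2) ^ 2 / (σ1 ^ 2 + ε)) with hρ
  have h3 : 0 < √3 := by positivity
  have hρ0 : 0 ≤ ρ := by
    have := hδ.1
    positivity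
  have hρ1 : ρ < 1 := by
    have hd : 0 < 1 / √3 - δ := by linarith
    have hpos : 0 < σ1 ^ 2 + ε := by positivity
    have : (σ1 ^ 2) ^ 2 / (σ1 ^ 2 + ε) < 1 / √3 - δ := by
      have h5 : (σ1 ^ 2) ^ 2 / (1 / √3 - δ) < σ1 ^ 2 + ε := by
        have : (σ1 ^ 2 / (1 / √3 - δ) - 1) * σ1 ^ 2 =
          (σ1 ^ 2) ^ 2 / (1 / √3 - δ) - σ1 ^ 2 := by ring
        linarith
      rw [div_lt_iff₀ hd] at h5
      rw [div_lt_iff₀ hpos]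
      linarith
    calc ρ < √3 * (1 / √3) := by
          rw [hρ]
          exact mul_lt_mul_of_pos_left (by linarith) h3
      _ = 1 := by field_simp
  have hsp : ∀ p, (supp (xs p)).ncard ≤ k := by
    intro p
    cases p with
    | zero => exact hx0
    | succ p =>
      obtain ⟨S, hS, -, h0, -⟩ := hiter p
      rw [← hS]
      refine Set.ncard_le_ncard (fun i hi => ?_) S.toFinite
      by_contra hiS
      exact hi (h0 i hiS)
  have hgeo : ∀ p, norm2 (xs p - x) ≤ ρ ^ p * norm2 (xs 0 - x) := by
    intro p
    induction p with
    | zero => simp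
    | succ p ih =>
      obtain ⟨S, hS⟩ := hiter p
      have := step_bound A hε0 hsA hδ x (xs p) (xs (p + 1)) hx (hsp p) S hS
      calc norm2 (xs (p + 1) - x) ≤ ρ * norm2 (xs p - x) := this
        _ ≤ ρ * (ρ ^ p * norm2 (xs 0 - x)) := by gcongr
        _ = _ := by ring
  refine squeeze_zero (fun p => norm2_nonneg' _) hgeo ?_
  simpa using (tendsto_pow_atTop_nhds_zero_of_lt_one hρ0 hρ1).mul_const (norm2 (xs 0 - x))
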